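/- Let k be an algebraically closed field of characteristic 11. For every squarefree polynomial f(x) = Σ_{i=1}^{21} c_i x^i ∈ k[x] with c_21 = 1, the 10×10 matrix A with entries a_{ij} = κ_{11i−j}, where f(x)⁵ = Σ_m κ_m x^m, does not have rank 1. (Equivalently: there are no smooth hyperelliptic curves of genus 10 with a-number 9 over a field of characteristic 11.) -/

import Mathlib

open Polynomial

/-!
Put `n = (p - 1) / 2`. Modulo `p`, the derivative of `F = f ^ n` only sees the coefficients of `F`
at exponents prime to `p`, and for `p ≤ g + 1` all of these occur in the Cartier–Manin matrix. If
that matrix is an outer product, then `F' = V(X ^ p) * L` with `deg L < p`. A separable `f` divides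
`F' = n f ^ (n - 1) f'` to the exact order `n - 1 < p` at each of its factors, whereas a separable
polynomial dividing `V(X ^ p)`, whose derivative is zero, divides it to order at least `p`. Hence
`f` is coprime to `V(X ^ p)` and `f ^ (n - 1)` divides `L`, which is impossible for reasons of
degree as soon as `2 ≤ n`.
-/

theorem exists_eq_vecMulVec_of_rank_le_one {m n k : Type*} [Finite m] [Fintype n] [Field k]
    {A : Matrix m n k} (hA : A.rank ≤ 1) : ∃ w s, A = Matrix.vecMulVec w s := by
  rw [Matrix.rank_eq_finrank_span_cols, Submodule.finrank_le_one_iff_isPrincipal] at hA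
  obtain ⟨w, hw⟩ := hA
  have hcol (j : n) : ∃ c : k, c • w = A.col j :=
    Submodule.mem_span_singleton.mp (hw ▸ Submodule.subset_span ⟨j, rfl⟩)
  choose s hs using hcol
  refine ⟨w, s, Matrix.ext fun i j => ?_⟩
  rw [Matrix.vecMulVec_apply, mul_comm]
  exact (congrFun (hs j) i).symm

theorem natDegree_sum_Icc_C_mul_X_pow {R : Type*} [Semiring R] {m n : ℕ} (hmn : m ≤ n)
    {c : ℕ → R} (hc : c n ≠ 0) :
    (∑ i ∈ Finset.Icc m n, C (c i) * X ^ i).natDegree = n := by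
  apply natDegree_eq_of_le_of_coeff_ne_zero
  · refine natDegree_sum_le_of_forall_le _ _ fun i hi => ?_
    exact (natDegree_C_mul_X_pow_le _ _).trans (Finset.mem_Icc.mp hi).2
  · simpa [finsetSum_coeff, coeff_X_pow, hmn] using hc

theorem exists_eq_expand_mul_of_coeff_eq_mul {R : Type*} [CommSemiring R] {p g : ℕ} {F : R[X]}
    (hF : F.natDegree < g * p) {v : Fin g → R} {l : Fin p → R}
    (hcoeff : ∀ (i : Fin g) (r : Fin p), F.coeff (r + p * i) = v i * l r) :
    ∃ V L : R[X], L.degree < p ∧ F = expand R p V * L := by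
  refine ⟨∑ i, C (v i) * X ^ (i : ℕ), ∑ r, C (l r) * X ^ (r : ℕ), degree_sum_fin_lt l, ?_⟩
  calc
    F = ∑ m : Fin (g * p), C (F.coeff m) * X ^ (m : ℕ) := by
      rw [Fin.sum_univ_eq_sum_range fun m => C (F.coeff m) * X ^ m]
      exact F.as_sum_range_C_mul_X_pow' hF
    _ = ∑ x : Fin g × Fin p, C (v x.1 * l x.2) * X ^ (x.2 + p * x.1 : ℕ) := by
      rw [← finProdFinEquiv.sum_comp]
      simp only [finProdFinEquiv_apply_val, hcoeff]
    _ = ∑ i, ∑ r, (C (v i) * X ^ (p * i : ℕ)) * (C (l r) * X ^ (r : ℕ)) := by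
      rw [Fintype.sum_prod_type]
      refine Fintype.sum_congr _ _ fun i => Fintype.sum_congr _ _ fun r => ?_
      rw [C_mul, pow_add]
      ring
    _ = _ := by
      simp only [map_sum, map_mul, map_pow, expand_C, expand_X, ← pow_mul, Finset.sum_mul_sum]

theorem derivative_expand_eq_zero {R : Type*} [CommSemiring R] (p : ℕ) [CharP R p] (V : R[X]) :
    derivative (expand R p V) = 0 := by
  rw [derivative_expand, CharP.cast_eq_zero, zero_mul, mul_zero]

section Separable

variable {k : Type*} [Field k]

theorem pow_succ_dvd_of_derivative_eq_zero {q E : k[X]} (hq : q.Separable)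
    (hE : derivative E = 0) {m : ℕ} (hm : (m : k) ≠ 0) (hdvd : q ^ m ∣ E) : q ^ (m + 1) ∣ E := by
  obtain ⟨u, rfl⟩ := hdvd
  obtain ⟨j, rfl⟩ : ∃ j, m = j + 1 := Nat.exists_eq_succ_of_ne_zero (by rintro rfl; simp at hm)
  have hderiv : C ((j + 1 : ℕ) : k) * derivative q * u + q * derivative u = 0 := by
    apply (mul_eq_zero.mp ?_).resolve_left (pow_ne_zero j hq.ne_zero)
    rw [← hE, derivative_mul, derivative_pow_succ, Nat.cast_succ]
    ring
  have hqu : q ∣ C ((j + 1 : ℕ) : k) * derivative q * u :=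
    (dvd_add_left (dvd_mul_right q _)).mp (hderiv ▸ dvd_zero q)
  have hcop : IsCoprime q (C ((j + 1 : ℕ) : k) * derivative q) :=
    (isCoprime_mul_unit_left_right (isUnit_C.mpr hm.isUnit) _ _).mpr hq
  rw [pow_succ q (j + 1)]
  exact mul_dvd_mul_left _ (hcop.dvd_of_dvd_mul_left hqu)

variable {p : ℕ} [CharP k p]

theorem natCast_ne_zero_of_lt_char {m : ℕ} (hm : 0 < m) (hmp : m < p) : (m : k) ≠ 0 := by
  rw [Ne, CharP.cast_eq_zero_iff k p]
  exact Nat.not_dvd_of_pos_of_lt hm hmp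

theorem pow_char_dvd_of_derivative_eq_zero {q E : k[X]} (hq : q.Separable)
    (hE : derivative E = 0) (hdvd : q ∣ E) : q ^ p ∣ E := by
  have hpow (m : ℕ) (hm : m ≤ p) : q ^ m ∣ E := by
    induction m with
    | zero => simp
    | succ m ih =>
      rcases m.eq_zero_or_pos with rfl | hpos
      · simpa using hdvd
      · exact pow_succ_dvd_of_derivative_eq_zero hq hE (natCast_ne_zero_of_lt_char hpos hm)
          (ih (Nat.le_of_succ_le hm))
  exact hpow p le_rfl

theorem isCoprime_of_mul_eq_pow_mul_derivative {f E M : k[X]} (hf : f.Separable)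
    (hE : derivative E = 0) {m : ℕ} (hm : m < p) (hEM : E * M = f ^ m * derivative f) :
    IsCoprime E f := by
  refine IsRelPrime.isCoprime fun d hdE hdf => ?_
  obtain ⟨u, rfl⟩ := hdf
  have hd : d.Separable := hf.of_mul_left
  have hd_pow : d ^ m * d ∣ d ^ m * (u ^ m * derivative (d * u)) := by
    rw [← pow_succ, ← mul_assoc, ← mul_pow, ← hEM]
    exact ((pow_dvd_pow d hm).trans (pow_char_dvd_of_derivative_eq_zero hd hE hdE)).mul_right M
  have hd_dvd : d ∣ u ^ m * derivative (d * u) :=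
    (mul_dvd_mul_iff_left (pow_ne_zero m hd.ne_zero)).mp hd_pow
  have hcop : IsCoprime d (u ^ m * derivative (d * u)) :=
    hf.isCoprime.pow_right.mul_right (IsCoprime.of_mul_left_left hf)
  exact hcop.isUnit_of_dvd hd_dvd

theorem pow_dvd_of_derivative_pow_eq_mul {f E L : k[X]} (hf : f.Separable)
    (hE : derivative E = 0) {m : ℕ} (hm : m + 1 < p) (hEL : derivative (f ^ (m + 1)) = E * L) :
    f ^ m ∣ L := by
  have hc : ((m + 1 : ℕ) : k) ≠ 0 := natCast_ne_zero_of_lt_char m.succ_pos hm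
  have hEL' : E * (C ((m + 1 : ℕ) : k)⁻¹ * L) = f ^ m * derivative f := by
    rw [mul_left_comm, ← hEL, derivative_pow_succ, ← Nat.cast_succ, mul_assoc, ← mul_assoc,
      ← C_mul, inv_mul_cancel₀ hc, C_1, one_mul]
  have hcop : IsCoprime (f ^ m) E :=
    (isCoprime_of_mul_eq_pow_mul_derivative hf hE (Nat.lt_of_succ_lt hm) hEL').symm.pow_left
  refine hcop.dvd_of_dvd_mul_left ?_
  rw [← hEL, derivative_pow_succ]
  exact (dvd_mul_left _ _).mul_right _

theorem derivative_ne_zero_of_separable {f : k[X]} (hf : f.Separable) (hdeg : f.natDegree ≠ 0) :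
    derivative f ≠ 0 := by
  intro hderiv
  have hunit : IsUnit f := isCoprime_zero_right.mp (hderiv ▸ hf)
  exact hdeg (natDegree_eq_zero_of_isUnit hunit)

theorem degree_pow_le_of_derivative_pow_eq_mul {f E L : k[X]} (hf : f.Separable)
    (hdeg : f.natDegree ≠ 0) (hE : derivative E = 0) {m : ℕ} (hm : m + 1 < p)
    (hEL : derivative (f ^ (m + 1)) = E * L) : (f ^ m).degree ≤ L.degree := by
  have hc : ((m + 1 : ℕ) : k) ≠ 0 := natCast_ne_zero_of_lt_char m.succ_pos hm
  have hEL_ne : E * L ≠ 0 := by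
    rw [← hEL, derivative_pow_succ, ← Nat.cast_succ]
    exact mul_ne_zero (mul_ne_zero (C_ne_zero.mpr hc) (pow_ne_zero m hf.ne_zero))
      (derivative_ne_zero_of_separable hf hdeg)
  exact degree_le_of_dvd (pow_dvd_of_derivative_pow_eq_mul hf hE hm hEL)
    (right_ne_zero_of_mul hEL_ne)

end Separable

/-- The Cartier–Manin matrix of the genus `g` curve `y² = f(x)` in characteristic `p`, with entries
`κ_{p i - j}` for `1 ≤ i, j ≤ g`, where `f ^ ((p - 1) / 2) = ∑ κ_m X ^ m`. Rows and columns are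
indexed from `0`; shifting by `X ^ j` instead of subtracting `j` makes `κ` vanish at negative
indices. -/
noncomputable def cartierManinMatrix {R : Type*} [CommSemiring R] (p g : ℕ) (f : R[X]) :
    Matrix (Fin g) (Fin g) R :=
  Matrix.of fun i j => (f ^ ((p - 1) / 2) * X ^ ((j : ℕ) + 1)).coeff (p * ((i : ℕ) + 1))

theorem cartierManinMatrix_apply_of_lt {R : Type*} [CommSemiring R] {p g : ℕ} (f : R[X])
    (i j : Fin g) (hj : (j : ℕ) < p) :
    cartierManinMatrix p g f i j =
      (f ^ ((p - 1) / 2)).coeff (p * ((i : ℕ) + 1) - ((j : ℕ) + 1)) := by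
  rw [cartierManinMatrix, Matrix.of_apply, coeff_mul_X_pow', if_pos]
  exact Nat.succ_le_of_lt (hj.trans_le (Nat.le_mul_of_pos_right p i.val.succ_pos))

theorem exists_derivative_eq_expand_mul_of_eq_vecMulVec {R : Type*} [CommSemiring R] {p g : ℕ}
    [CharP R p] (hp : 1 < p) (hg : p ≤ g + 1) {f : R[X]}
    (hdeg : (f ^ ((p - 1) / 2)).natDegree ≤ p * g) {w s : Fin g → R}
    (hws : cartierManinMatrix p g f = Matrix.vecMulVec w s) :
    ∃ V L : R[X], L.degree < p ∧ derivative (f ^ ((p - 1) / 2)) = expand R p V * L := by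
  have hdeg' : (derivative (f ^ ((p - 1) / 2))).natDegree < g * p := by
    have hpos : 0 < g * p := Nat.mul_pos (by omega) (by omega)
    have hle := natDegree_derivative_le (f ^ ((p - 1) / 2))
    rw [mul_comm p g] at hdeg
    omega
  -- Exponent `p i + r` of the derivative comes from column `p - 2 - r`; at `r = p - 1` the factor
  -- `r + 1` vanishes, so the truncated column index is irrelevant.
  refine exists_eq_expand_mul_of_coeff_eq_mul (v := w)
    (l := fun r => s ⟨p - 2 - r, by omega⟩ * ((r : ℕ) + 1)) hdeg' fun i r => ?_
  have hcast : ((r + p * i : ℕ) : R) + 1 = (r : ℕ) + 1 := by simp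
  rw [coeff_derivative, hcast, ← mul_assoc]
  rcases eq_or_ne ((r : ℕ) + 1) p with hr | hr
  · have hzero : ((r : ℕ) : R) + 1 = 0 := by
      rw [← Nat.cast_add_one, hr, CharP.cast_eq_zero]
    rw [hzero, mul_zero, mul_zero]
  · have hindex : (r + p * i + 1 : ℕ) = p * (i + 1) - (p - 2 - r + 1) := by
      rw [mul_add_one]
      omega
    have hentry := cartierManinMatrix_apply_of_lt f i ⟨p - 2 - r, by omega⟩
      (show p - 2 - r < p by omega)
    rw [hws, Matrix.vecMulVec_apply] at hentry
    rw [hentry, hindex]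

theorem natDegree_pow_half_pred_le {R : Type*} [Semiring R] {p g : ℕ} (hg : p ≤ g + 1) {f : R[X]}
    (hdeg : f.natDegree ≤ 2 * g + 2) : (f ^ ((p - 1) / 2)).natDegree ≤ p * g := by
  rcases p with _ | q
  · simp
  calc
    (f ^ (q / 2)).natDegree ≤ q / 2 * (2 * g + 2) := natDegree_pow_le_of_le _ hdeg
    _ = q / 2 * 2 * (g + 1) := by ring
    _ ≤ q * (g + 1) := Nat.mul_le_mul_right _ (Nat.div_mul_le_self q 2)
    _ ≤ (q + 1) * g := by linarith

theorem no_rank_one_char11_genus10_general {k : Type*} [Field k] {p g : ℕ} [CharP k p]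
    (hp : 5 ≤ p) (hg : p ≤ g + 1) {f : k[X]} (hf : f.Separable) (hdeg_ge : 2 * g + 1 ≤ f.natDegree)
    (hdeg_le : f.natDegree ≤ 2 * g + 2) : 1 < (cartierManinMatrix p g f).rank := by
  by_contra! hrank
  obtain ⟨w, s, hws⟩ := exists_eq_vecMulVec_of_rank_le_one hrank
  obtain ⟨V, L, hL, hVL⟩ := exists_derivative_eq_expand_mul_of_eq_vecMulVec (by omega)
    hg (natDegree_pow_half_pred_le hg hdeg_le) hws
  obtain ⟨m, hm⟩ : ∃ m, (p - 1) / 2 = m + 2 := Nat.exists_eq_add_of_le' (by omega)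
  rw [hm] at hVL
  have hlt : (f ^ (m + 1)).degree < p :=
    (degree_pow_le_of_derivative_pow_eq_mul hf (by omega) (derivative_expand_eq_zero p V)
      (by omega) hVL).trans_lt hL
  rw [← natDegree_lt_iff_degree_lt (pow_ne_zero _ hf.ne_zero), natDegree_pow] at hlt
  have hmul : f.natDegree ≤ (m + 1) * f.natDegree := Nat.le_mul_of_pos_left _ m.succ_pos
  omega

theorem no_rank_one_char11_genus10
    (k : Type*) [Field k] [IsAlgClosed k] [CharP k 11]
    (c : ℕ → k) (hclead : c 21 = 1)
    (f : k[X]) (hf : f = ∑ i ∈ Finset.Icc 1 21, C (c i) * X ^ i)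
    (A : Matrix (Fin 10) (Fin 10) k)
    (hA : ∀ i j : Fin 10,
      A i j = (f ^ 5).coeff (11 * ((i : ℕ) + 1) - ((j : ℕ) + 1)))
    (hsqf : Squarefree f) :
    A.rank ≠ 1 := by
  have hdeg : f.natDegree = 21 :=
    hf ▸ natDegree_sum_Icc_C_mul_X_pow (by norm_num) (hclead ▸ one_ne_zero)
  have hA' : A = cartierManinMatrix 11 10 f := by
    ext i j
    rw [hA, cartierManinMatrix_apply_of_lt f i j (by omega)]
  rw [hA']
  exact (no_rank_one_char11_genus10_general (by norm_num) (by norm_num)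
    (PerfectField.separable_iff_squarefree.mpr hsqf) hdeg.ge (by omega)).ne'
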